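/- Consider the 6×7 block matrix 𝒪 with block rows (A₁, A₂, 0, 0), (−M, 0, v, 0), (c·v·wᵀ, J'v·ω̄ₛ placed as zero 2×2 block, J v·ω̄ₛ, d·v) where A₂ and M are invertible 2×2 matrices, v ∈ ℝ² nonzero, d ≠ 0, and J v·ω̄ₛ is not parallel to v. Then 𝒪 has full row rank 6. -/

import Mathlib

open Matrix

theorem stmt_14
    (J : Matrix (Fin 2) (Fin 2) ℝ) (hJ : J = !![0, -1; 1, 0])
    (A1 A2 M : Matrix (Fin 2) (Fin 2) ℝ)
    (hA2 : IsUnit A2) (hM : IsUnit M)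
    (v w : Fin 2 → ℝ) (hv : v ≠ 0)
    (c d : ℝ) (hd : d ≠ 0)
    (ws : ℝ)
    (hind : LinearIndependent ℝ ![ws • J.mulVec v, v])
    (O : Matrix (Fin 6) (Fin 6) ℝ)
    (hO : O = Matrix.of
      ![![A1 0 0, A1 0 1, A2 0 0, A2 0 1, 0, 0],
        ![A1 1 0, A1 1 1, A2 1 0, A2 1 1, 0, 0],
        ![-M 0 0, -M 0 1, 0, 0, v 0, 0],
        ![-M 1 0, -M 1 1, 0, 0, v 1, 0],
        ![c * v 0 * w 0, c * v 0 * w 1, 0, 0, (J.mulVec v 0) * ws, d * v 0],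
        ![c * v 1 * w 0, c * v 1 * w 1, 0, 0, (J.mulVec v 1) * ws, d * v 1]]) :
    O.rank = 6 := by
  have hA : A2 0 0 * A2 1 1 - A2 0 1 * A2 1 0 ≠ 0 := by
    have := (Matrix.isUnit_iff_isUnit_det _).1 hA2
    rw [Matrix.det_fin_two] at this
    exact this.ne_zero
  have hMd : M 0 0 * M 1 1 - M 0 1 * M 1 0 ≠ 0 := by
    have := (Matrix.isUnit_iff_isUnit_det _).1 hM
    rw [Matrix.det_fin_two] at this
    exact this.ne_zero
  have hws : ws ≠ 0 := by
    rintro rfl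
    exact hind.ne_zero 0 (by simp)
  have hvv : v 0 * v 0 + v 1 * v 1 ≠ 0 := by
    intro h
    apply hv
    have h0 : v 0 = 0 := by nlinarith [mul_self_nonneg (v 0), mul_self_nonneg (v 1)]
    have h1 : v 1 = 0 := by nlinarith [mul_self_nonneg (v 0), mul_self_nonneg (v 1)]
    ext i
    fin_cases i <;> simp [h0, h1]
  have hJ0 : J.mulVec v 0 = - v 1 := by
    subst hJ; simp [Matrix.mulVec, dotProduct, Fin.sum_univ_two]
  have hJ1 : J.mulVec v 1 = v 0 := by
    subst hJ; simp [Matrix.mulVec, dotProduct, Fin.sum_univ_two]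
  have hdet : O.det ≠ 0 := by
    intro h0
    obtain ⟨x, hx, hxO⟩ := Matrix.exists_vecMul_eq_zero_iff.2 h0
    apply hx
    rw [hJ0, hJ1] at hO
    have e0 := congrFun hxO 0
    have e1 := congrFun hxO 1
    have e2 := congrFun hxO 2
    have e3 := congrFun hxO 3
    have e4 := congrFun hxO 4
    have e5 := congrFun hxO 5
    simp [hO, Matrix.vecMul, dotProduct, Fin.sum_univ_six] at e0 e1 e2 e3 e4 e5
    have x0 : x 0 = 0 := by
      apply (mul_eq_zero.1 (?_ : x 0 * (A2 0 0 * A2 1 1 - A2 0 1 * A2 1 0) = 0)).resolve_right hA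
      linear_combination A2 1 1 * e2 - A2 1 0 * e3
    have x1 : x 1 = 0 := by
      apply (mul_eq_zero.1 (?_ : x 1 * (A2 0 0 * A2 1 1 - A2 0 1 * A2 1 0) = 0)).resolve_right hA
      linear_combination A2 0 0 * e3 - A2 0 1 * e2
    have ev : x 4 * v 0 + x 5 * v 1 = 0 := by
      apply (mul_eq_zero.1 (?_ : d * (x 4 * v 0 + x 5 * v 1) = 0)).resolve_left hd
      linear_combination e5
    have f0 : x 2 * M 0 0 + x 3 * M 1 0 = 0 := by
      linear_combination -e0 + A1 0 0 * x0 + A1 1 0 * x1 + c * w 0 * ev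
    have f1 : x 2 * M 0 1 + x 3 * M 1 1 = 0 := by
      linear_combination -e1 + A1 0 1 * x0 + A1 1 1 * x1 + c * w 1 * ev
    have x2 : x 2 = 0 := by
      apply (mul_eq_zero.1 (?_ : x 2 * (M 0 0 * M 1 1 - M 0 1 * M 1 0) = 0)).resolve_right hMd
      linear_combination M 1 1 * f0 - M 1 0 * f1
    have x3 : x 3 = 0 := by
      apply (mul_eq_zero.1 (?_ : x 3 * (M 0 0 * M 1 1 - M 0 1 * M 1 0) = 0)).resolve_right hMd
      linear_combination M 0 0 * f1 - M 0 1 * f0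
    have g : x 5 * v 0 - x 4 * v 1 = 0 := by
      apply (mul_eq_zero.1 (?_ : ws * (x 5 * v 0 - x 4 * v 1) = 0)).resolve_left hws
      linear_combination e4 - v 0 * x2 - v 1 * x3
    have x4 : x 4 = 0 := by
      apply (mul_eq_zero.1 (?_ : x 4 * (v 0 * v 0 + v 1 * v 1) = 0)).resolve_right hvv
      linear_combination v 0 * ev - v 1 * g
    have x5 : x 5 = 0 := by
      apply (mul_eq_zero.1 (?_ : x 5 * (v 0 * v 0 + v 1 * v 1) = 0)).resolve_right hvv
      linear_combination v 1 * ev + v 0 * g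
    ext i
    fin_cases i <;> simp [x0, x1, x2, x3, x4, x5]
  have hu : IsUnit O := (Matrix.isUnit_iff_isUnit_det _).2 (isUnit_iff_ne_zero.2 hdet)
  simpa using Matrix.rank_of_isUnit O hu
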